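/- arXiv:2207.04387 — 7 statements merged into one kernel-verified Lean document; each statement's English description precedes it below -/
import Mathlib

section
/- Let ρ > 0, let ψ : ℝ^d → ℝ be differentiable and ρ-strongly convex, let L ≥ 0, let g : ℝ^d → ℝ be L-Lipschitz, let f : ℝ^d → ℝ be measurable, and let λ > 0. Set U := f + g and U_λ := f + env_{λ,g}^ψ, where env_{λ,g}^ψ denotes either the left or the right Bregman–Moreau envelope of g. If 0 < ∫_{ℝ^d} e^{−U(x)} dx < ∞, then ∫_{ℝ^d} e^{−U(x)} dx ≤ ∫_{ℝ^d} e^{−U_λ(x)} dx ≤ e^{λL²/(2ρ)} · ∫_{ℝ^d} e^{−U(x)} dx < ∞; in particular e^{−U_λ} is Lebesgue-integrable. -/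
open scoped RealInnerProductSpace ENNReal
open MeasureTheory

/-- The Bregman divergence associated with a differentiable function `ψ`. -/
noncomputable def bregmanDiv {d : ℕ} (ψ : EuclideanSpace ℝ (Fin d) → ℝ)
    (x y : EuclideanSpace ℝ (Fin d)) : ℝ :=
  ψ x - ψ y - ⟪gradient ψ y, x - y⟫

/-- The left Bregman–Moreau envelope of `g` associated with `ψ`. -/
noncomputable def leftEnv {d : ℕ} (ψ g : EuclideanSpace ℝ (Fin d) → ℝ) (lam : ℝ)
    (x : EuclideanSpace ℝ (Fin d)) : ℝ :=
  ⨅ y : EuclideanSpace ℝ (Fin d), (g y + (1 / lam) * bregmanDiv ψ y x)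

/-- The right Bregman–Moreau envelope of `g` associated with `ψ`. -/
noncomputable def rightEnv {d : ℕ} (ψ g : EuclideanSpace ℝ (Fin d) → ℝ) (lam : ℝ)
    (x : EuclideanSpace ℝ (Fin d)) : ℝ :=
  ⨅ y : EuclideanSpace ℝ (Fin d), (g y + (1 / lam) * bregmanDiv ψ x y)

/-- Strong convexity of `ψ` bounds its Bregman divergence below by a quadratic. -/
lemma sq_norm_le_bregmanDiv {d : ℕ} {ρ : ℝ} {ψ : EuclideanSpace ℝ (Fin d) → ℝ}
    (hsc : ∀ y ytil : EuclideanSpace ℝ (Fin d),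
      ψ ytil + ⟪gradient ψ ytil, y - ytil⟫ + ρ / 2 * ‖y - ytil‖ ^ 2 ≤ ψ y)
    (x y : EuclideanSpace ℝ (Fin d)) : ρ / 2 * ‖x - y‖ ^ 2 ≤ bregmanDiv ψ x y := by
  unfold bregmanDiv
  linarith [hsc x y]

@[simp]
lemma bregmanDiv_self {d : ℕ} (ψ : EuclideanSpace ℝ (Fin d) → ℝ)
    (x : EuclideanSpace ℝ (Fin d)) : bregmanDiv ψ x x = 0 := by
  simp [bregmanDiv]

lemma measurable_gradient {d : ℕ} (ψ : EuclideanSpace ℝ (Fin d) → ℝ) :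
    Measurable (gradient ψ) :=
  (InnerProductSpace.toDual ℝ (EuclideanSpace ℝ (Fin d))).symm.continuous.measurable.comp
    (measurable_fderiv ℝ ψ)

lemma continuous_bregmanDiv_left {d : ℕ} {ψ : EuclideanSpace ℝ (Fin d) → ℝ}
    (hψ : Continuous ψ) (y : EuclideanSpace ℝ (Fin d)) :
    Continuous fun x => bregmanDiv ψ x y := by
  unfold bregmanDiv
  fun_prop

lemma measurable_bregmanDiv_right {d : ℕ} {ψ : EuclideanSpace ℝ (Fin d) → ℝ}
    (hψ : Continuous ψ) (x : EuclideanSpace ℝ (Fin d)) :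
    Measurable fun y => bregmanDiv ψ x y := by
  unfold bregmanDiv
  exact (measurable_const.sub hψ.measurable).sub
    ((measurable_gradient ψ).inner (measurable_const.sub measurable_id))

/-- If `D` dominates `ρ/2 ‖x - y‖²` and `g` is `L`-Lipschitz, then the objective of the Moreau
envelope at `x` is at least `g x - λL²/(2ρ)`. -/
lemma sub_le_add_mul_of_lipschitz {E : Type*} [SeminormedAddCommGroup E] {ρ lam L D : ℝ}
    (hρ : 0 < ρ) (hlam : 0 < lam) {g : E → ℝ} (hg : ∀ x y, |g x - g y| ≤ L * ‖x - y‖) {x y : E}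
    (hD : ρ / 2 * ‖x - y‖ ^ 2 ≤ D) :
    g x - lam * L ^ 2 / (2 * ρ) ≤ g y + (1 / lam) * D := by
  have hxy := (abs_le.1 (hg x y)).2
  have hmul : 1 / lam * (ρ / 2 * ‖x - y‖ ^ 2) ≤ 1 / lam * D := by gcongr
  have hsq : 1 / lam * (ρ / 2 * ‖x - y‖ ^ 2) - L * ‖x - y‖ + lam * L ^ 2 / (2 * ρ)
      = (ρ * ‖x - y‖ - lam * L) ^ 2 / (2 * ρ * lam) := by
    field_simp
    ring
  have hnonneg : 0 ≤ (ρ * ‖x - y‖ - lam * L) ^ 2 / (2 * ρ * lam) := by positivity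
  linarith

/-- An infimum of functions that are measurable in the parameter and continuous in the index is
measurable. -/
lemma measurable_ciInf_of_continuous {α ι : Type*} [MeasurableSpace α] [TopologicalSpace ι]
    [TopologicalSpace.SeparableSpace ι] {F : ι → α → ℝ} (hmeas : ∀ i, Measurable (F i))
    (hcont : ∀ a, Continuous fun i => F i a) :
    Measurable fun a => ⨅ i, F i a := by
  obtain ⟨s, hs, hdense⟩ := TopologicalSpace.exists_countable_dense ι
  have := hs.to_subtype
  have h : (fun a => ⨅ i, F i a) = fun a => ⨅ i : s, F i a :=
    funext fun a => (hdense.ciInf' (hcont a)).symm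
  rw [h]
  exact Measurable.iInf fun i => hmeas i

/-- With `U = f + g` and `U_λ = f + env_{λ,g}^ψ` (left or right envelope), if
`0 < ∫ e^{−U} < ∞` then `∫ e^{−U} ≤ ∫ e^{−U_λ} ≤ e^{λL²/(2ρ)} ∫ e^{−U} < ∞`; in
particular `e^{−U_λ}` is Lebesgue-integrable. -/
theorem stmt2 {d : ℕ} (ρ : ℝ) (hρ : 0 < ρ)
    (ψ : EuclideanSpace ℝ (Fin d) → ℝ)
    (hdiff : Differentiable ℝ ψ)
    (hsc : ∀ y ytil : EuclideanSpace ℝ (Fin d),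
      ψ ytil + ⟪gradient ψ ytil, y - ytil⟫ + ρ / 2 * ‖y - ytil‖ ^ 2 ≤ ψ y)
    (L : ℝ) (hL : 0 ≤ L)
    (g : EuclideanSpace ℝ (Fin d) → ℝ)
    (hg : ∀ x y, |g x - g y| ≤ L * ‖x - y‖)
    (f : EuclideanSpace ℝ (Fin d) → ℝ) (hf : Measurable f)
    (lam : ℝ) (hlam : 0 < lam)
    (env : EuclideanSpace ℝ (Fin d) → ℝ)
    (henv : env = leftEnv ψ g lam ∨ env = rightEnv ψ g lam)
    (hpos : 0 < ∫⁻ x, ENNReal.ofReal (Real.exp (-(f x + g x))))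
    (hfin : (∫⁻ x, ENNReal.ofReal (Real.exp (-(f x + g x)))) < ∞) :
    (∫⁻ x, ENNReal.ofReal (Real.exp (-(f x + g x)))) ≤
        (∫⁻ x, ENNReal.ofReal (Real.exp (-(f x + env x)))) ∧
    (∫⁻ x, ENNReal.ofReal (Real.exp (-(f x + env x)))) ≤
        ENNReal.ofReal (Real.exp (lam * L ^ 2 / (2 * ρ))) *
          ∫⁻ x, ENNReal.ofReal (Real.exp (-(f x + g x))) ∧
    (∫⁻ x, ENNReal.ofReal (Real.exp (-(f x + env x)))) < ∞ ∧
    Integrable (fun x => Real.exp (-(f x + env x))) := by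
  have hψ := hdiff.continuous
  have hgc : Continuous g := by
    refine (LipschitzWith.of_dist_le_mul (K := L.toNNReal) fun x y => ?_).continuous
    rw [Real.dist_eq, dist_eq_norm, Real.coe_toNNReal L hL]
    exact hg x y
  have hleft : ∀ x y, g x - lam * L ^ 2 / (2 * ρ) ≤ g y + (1 / lam) * bregmanDiv ψ y x :=
    fun x y => sub_le_add_mul_of_lipschitz hρ hlam hg
      (norm_sub_rev x y ▸ sq_norm_le_bregmanDiv hsc y x)
  have hright : ∀ x y, g x - lam * L ^ 2 / (2 * ρ) ≤ g y + (1 / lam) * bregmanDiv ψ x y :=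
    fun x y => sub_le_add_mul_of_lipschitz hρ hlam hg (sq_norm_le_bregmanDiv hsc x y)
  have hleftBdd (x) : BddBelow (Set.range fun y => g y + (1 / lam) * bregmanDiv ψ y x) :=
    ⟨_, Set.forall_mem_range.2 (hleft x)⟩
  have hrightBdd (x) : BddBelow (Set.range fun y => g y + (1 / lam) * bregmanDiv ψ x y) :=
    ⟨_, Set.forall_mem_range.2 (hright x)⟩
  obtain ⟨hle, hge, hmeas⟩ : (∀ x, env x ≤ g x) ∧
      (∀ x, g x - lam * L ^ 2 / (2 * ρ) ≤ env x) ∧ Measurable env := by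
    rcases henv with rfl | rfl
    · refine ⟨fun x => (ciInf_le (hleftBdd x) x).trans_eq (by simp), fun x => le_ciInf (hleft x),
        measurable_ciInf_of_continuous (fun y => ?_) (fun x => ?_)⟩
      · exact ((measurable_bregmanDiv_right hψ y).const_mul _).const_add _
      · exact hgc.add ((continuous_bregmanDiv_left hψ x).const_mul _)
    · refine ⟨fun x => (ciInf_le (hrightBdd x) x).trans_eq (by simp), fun x => le_ciInf (hright x),
        (upperSemicontinuous_ciInf hrightBdd fun y => ?_).measurable⟩
      exact (continuous_const.add
        ((continuous_bregmanDiv_left hψ y).const_mul _)).upperSemicontinuous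
  have hupper : (∫⁻ x, ENNReal.ofReal (Real.exp (-(f x + env x)))) ≤
      ENNReal.ofReal (Real.exp (lam * L ^ 2 / (2 * ρ))) *
        ∫⁻ x, ENNReal.ofReal (Real.exp (-(f x + g x))) := by
    rw [← lintegral_const_mul' _ _ ENNReal.ofReal_ne_top]
    refine lintegral_mono fun x => ?_
    rw [← ENNReal.ofReal_mul (Real.exp_nonneg _), ← Real.exp_add]
    gcongr
    linarith [hge x]
  have hfinite := hupper.trans_lt (ENNReal.mul_lt_top ENNReal.ofReal_lt_top hfin)
  refine ⟨lintegral_mono fun x => ?_, hupper, hfinite, ?_, ?_⟩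
  · gcongr
    exact hle x
  · exact (Real.measurable_exp.comp (hf.add hmeas).neg).aestronglyMeasurable
  · rwa [hasFiniteIntegral_iff_ofReal (ae_of_all _ fun x => Real.exp_nonneg _)]
end

section
/- Let U, U_λ : ℝ^d → ℝ ∪ {+∞} be measurable with U_λ(x) ≤ U(x) for all x, and suppose 0 < Z_U := ∫_{ℝ^d} e^{−U(x)} dx < ∞ and Z_λ := ∫_{ℝ^d} e^{−U_λ(x)} dx < ∞. Let π and π_λ be the probability measures on ℝ^d with Lebesgue densities e^{−U}/Z_U and e^{−U_λ}/Z_λ, respectively. Then ‖π_λ − π‖_TV ≤ 2·(1 − Z_U/Z_λ). -/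
open scoped ENNReal
open MeasureTheory

/-- `e^{-u}` for `u ∈ ℝ ∪ {±∞}`, valued in `ℝ≥0∞`. -/
noncomputable def expNeg (u : EReal) : ℝ≥0∞ :=
  if u = ⊤ then 0 else if u = ⊥ then ⊤ else ENNReal.ofReal (Real.exp (-u.toReal))

/-- The total variation distance `sup_{A Borel} |μ(A) − ν(A)|`. -/
noncomputable def tvDist {α : Type*} [MeasurableSpace α] (μ ν : Measure α) : ℝ :=
  ⨆ A : {A : Set α // MeasurableSet A}, |(μ A.1).toReal - (ν A.1).toReal|

theorem antitone_expNeg : Antitone expNeg := by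
  intro u v huv
  induction u <;> induction v <;> simp_all [expNeg]
  exact ENNReal.ofReal_le_ofReal (Real.exp_le_exp.2 (neg_le_neg huv))

/-- The normalized masses of a set `A` under two nested densities differ by at
most one minus the ratio of the total masses. Here `a ≤ b` are the masses of `A` and `a' ≤ b'` those of its complement. -/
theorem abs_div_sub_div_le {a b a' b' : ℝ} (ha : 0 ≤ a) (ha' : 0 ≤ a') (hab : a ≤ b)
    (hab' : a' ≤ b') (hpos : 0 < a + a') :
    |b / (b + b') - a / (a + a')| ≤ 1 - (a + a') / (b + b') := by
  have hW : 0 < b + b' := by linarith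
  rw [abs_le, div_sub_div _ _ hW.ne' hpos.ne', one_sub_div hW.ne', ← neg_div,
    div_le_div_iff₀ hW (by positivity), div_le_div_iff₀ (by positivity) hW]
  constructor
  · have : 0 ≤ (b + b') * (a' * (b + b' - (a + a')) + (b - a) * (a + a')) :=
      mul_nonneg hW.le (add_nonneg (mul_nonneg ha' (by linarith))
        (mul_nonneg (by linarith) hpos.le))
    linarith
  · have : 0 ≤ (b + b') * (a * (b + b' - (a + a')) + (b' - a') * (a + a')) :=
      mul_nonneg hW.le (add_nonneg (mul_nonneg ha (by linarith))
        (mul_nonneg (by linarith) hpos.le))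
    linarith

/-- The mass of `A` under a normalized density, as a quotient of real numbers. -/
theorem toReal_withDensity_div_apply {α : Type*} [MeasurableSpace α] (μ : Measure α)
    (f : α → ℝ≥0∞) {Z : ℝ≥0∞} (hZ : Z ≠ 0) {A : Set α} (hA : MeasurableSet A) :
    (μ.withDensity (fun x => f x / Z) A).toReal = (∫⁻ x in A, f x ∂μ).toReal / Z.toReal := by
  simp_rw [withDensity_apply _ hA, div_eq_mul_inv]
  rw [lintegral_mul_const' _ _ (ENNReal.inv_ne_top.2 hZ), ENNReal.toReal_mul, ENNReal.toReal_inv]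

/-- A finite integral splits into its parts over `A` and `Aᶜ`, as real numbers. -/
theorem toReal_lintegral_eq_add_compl {α : Type*} [MeasurableSpace α] {μ : Measure α}
    {f : α → ℝ≥0∞} (hf : ∫⁻ x, f x ∂μ ≠ ∞) {A : Set α} (hA : MeasurableSet A) :
    (∫⁻ x, f x ∂μ).toReal = (∫⁻ x in A, f x ∂μ).toReal + (∫⁻ x in Aᶜ, f x ∂μ).toReal := by
  rw [← lintegral_add_compl f hA, ENNReal.toReal_add
    (ne_top_of_le_ne_top hf (setLIntegral_le_lintegral A f))
    (ne_top_of_le_ne_top hf (setLIntegral_le_lintegral Aᶜ f))]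

/-- Normalizing nested densities `f ≤ g` gives measures at total variation distance at most
`1 - ∫ f / ∫ g`. -/
theorem tvDist_withDensity_div_le {α : Type*} [MeasurableSpace α] {μ : Measure α}
    {f g : α → ℝ≥0∞} (hfg : f ≤ g) (hf : 0 < ∫⁻ x, f x ∂μ) (hg : ∫⁻ x, g x ∂μ < ∞) :
    tvDist (μ.withDensity fun x => g x / ∫⁻ y, g y ∂μ) (μ.withDensity fun x => f x / ∫⁻ y, f y ∂μ)
      ≤ 1 - (∫⁻ x, f x ∂μ).toReal / (∫⁻ x, g x ∂μ).toReal := by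
  have hle : ∫⁻ x, f x ∂μ ≤ ∫⁻ x, g x ∂μ := lintegral_mono hfg
  have hf' : ∫⁻ x, f x ∂μ ≠ ∞ := (hle.trans_lt hg).ne
  have hmono (s : Set α) : (∫⁻ x in s, f x ∂μ).toReal ≤ (∫⁻ x in s, g x ∂μ).toReal :=
    ENNReal.toReal_mono (ne_top_of_le_ne_top hg.ne (setLIntegral_le_lintegral s g))
      (lintegral_mono hfg)
  have : Nonempty {A : Set α // MeasurableSet A} := ⟨⟨∅, .empty⟩⟩
  refine ciSup_le fun ⟨A, hA⟩ => ?_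
  have hpos := ENNReal.toReal_pos hf.ne' hf'
  rw [toReal_withDensity_div_apply μ g (hf.trans_le hle).ne' hA,
    toReal_withDensity_div_apply μ f hf.ne' hA]
  rw [toReal_lintegral_eq_add_compl hf' hA] at hpos ⊢
  rw [toReal_lintegral_eq_add_compl hg.ne hA]
  exact abs_div_sub_div_le ENNReal.toReal_nonneg ENNReal.toReal_nonneg (hmono A) (hmono Aᶜ) hpos

/-- If `U_λ ≤ U` pointwise and both normalizing constants are finite, then the
total variation distance between the associated Gibbs measures is at most
`2·(1 − Z_U/Z_λ)`. -/
theorem stmt3 {d : ℕ} (U Ulam : EuclideanSpace ℝ (Fin d) → EReal)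
    (hU : Measurable U) (hUlam : Measurable Ulam)
    (hUbot : ∀ x, U x ≠ ⊥) (hUlambot : ∀ x, Ulam x ≠ ⊥)
    (hle : ∀ x, Ulam x ≤ U x)
    (ZU Zlam : ℝ≥0∞)
    (hZU : ZU = ∫⁻ x, expNeg (U x))
    (hZlam : Zlam = ∫⁻ x, expNeg (Ulam x))
    (hZUpos : 0 < ZU) (hZUfin : ZU < ∞) (hZlamfin : Zlam < ∞)
    (π πlam : Measure (EuclideanSpace ℝ (Fin d)))
    (hπ : π = volume.withDensity fun x => expNeg (U x) / ZU)
    (hπlam : πlam = volume.withDensity fun x => expNeg (Ulam x) / Zlam) :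
    tvDist πlam π ≤ 2 * (1 - ZU.toReal / Zlam.toReal) := by
  subst hπ hπlam hZU hZlam
  have hfg : (fun x => expNeg (U x)) ≤ fun x => expNeg (Ulam x) :=
    fun x => antitone_expNeg (hle x)
  have hratio := div_le_one_of_le₀ (ENNReal.toReal_mono hZlamfin.ne (lintegral_mono hfg))
    ENNReal.toReal_nonneg
  linarith [tvDist_withDensity_div_le hfg hZUpos hZlamfin]
end

section
/- Let ρ > 0, let ψ : ℝ^d → ℝ be differentiable and ρ-strongly convex, let L ≥ 0, let g : ℝ^d → ℝ be L-Lipschitz, let f : ℝ^d → ℝ be measurable with 0 < ∫_{ℝ^d} e^{−(f+g)(x)} dx < ∞, and let λ > 0. Let π and π_λ^ψ be the probability measures with Lebesgue densities proportional to e^{−(f+g)} and e^{−(f + env_{λ,g}^ψ)} respectively, where env_{λ,g}^ψ denotes either the left or the right Bregman–Moreau envelope of g. Then for every measurable h : ℝ^d → [0, ∞) that is integrable with respect to both π and π_λ^ψ, e^{−λL²/(2ρ)} · E_π[h] ≤ E_{π_λ^ψ}[h] ≤ e^{λL²/(2ρ)} · E_π[h]. -/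
open scoped RealInnerProductSpace ENNReal
open MeasureTheory

/-- An infimal regularisation of an `L`-Lipschitz function by a penalty that vanishes at `x` and
grows at least quadratically away from `x` stays within `λL²/(2ρ)` below the function. -/
theorem iInf_add_penalty_bounds {E : Type*} [SeminormedAddCommGroup E] {g D : E → ℝ}
    {ρ L lam : ℝ} (hρ : 0 < ρ) (hlam : 0 < lam) (x : E)
    (hg : ∀ y, |g x - g y| ≤ L * ‖x - y‖)
    (hDx : D x = 0) (hD : ∀ y, ρ / 2 * ‖x - y‖ ^ 2 ≤ D y) :
    (⨅ y, (g y + (1 / lam) * D y)) ≤ g x ∧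
      g x ≤ (⨅ y, (g y + (1 / lam) * D y)) + lam * L ^ 2 / (2 * ρ) := by
  have key : ∀ y, g x - lam * L ^ 2 / (2 * ρ) ≤ g y + (1 / lam) * D y := by
    intro y
    have hLip := (abs_le.mp (hg y)).2
    have hpen : (1 / lam) * (ρ / 2 * ‖x - y‖ ^ 2) ≤ (1 / lam) * D y := by
      gcongr
      exact hD y
    have hsq : (1 / lam) * (ρ / 2 * ‖x - y‖ ^ 2) - L * ‖x - y‖ + lam * L ^ 2 / (2 * ρ)
        = (ρ * ‖x - y‖ - lam * L) ^ 2 / (2 * lam * ρ) := by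
      field_simp
      ring
    have hnn : 0 ≤ (ρ * ‖x - y‖ - lam * L) ^ 2 / (2 * lam * ρ) := by positivity
    linarith
  constructor
  · have h := ciInf_le ⟨_, Set.forall_mem_range.mpr key⟩ x
    simpa [hDx] using h
  · linarith [le_ciInf key]

/-- If two densities satisfy `a ≤ b ≤ C * a`, then the normalised measures dominate each other up
to the factor `C`. No measurability is required. -/
theorem withDensity_normalized_le_smul {α : Type*} [MeasurableSpace α] {μ : Measure α}
    {a b : α → ℝ≥0∞} {C : ℝ≥0∞} (hC0 : C ≠ 0) (hC : C ≠ ∞)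
    (hab : ∀ x, a x ≤ b x) (hba : ∀ x, b x ≤ C * a x) :
    μ.withDensity (fun x => a x / ∫⁻ y, a y ∂μ) ≤
        C • μ.withDensity (fun x => b x / ∫⁻ y, b y ∂μ) ∧
      μ.withDensity (fun x => b x / ∫⁻ y, b y ∂μ) ≤
        C • μ.withDensity (fun x => a x / ∫⁻ y, a y ∂μ) := by
  have hZ : ∫⁻ y, a y ∂μ ≤ ∫⁻ y, b y ∂μ := lintegral_mono hab
  have hZ' : ∫⁻ y, b y ∂μ ≤ C * ∫⁻ y, a y ∂μ :=
    (lintegral_mono hba).trans_eq (lintegral_const_mul' _ _ hC)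
  have hinv : (∫⁻ y, a y ∂μ)⁻¹ ≤ C * (∫⁻ y, b y ∂μ)⁻¹ :=
    calc (∫⁻ y, a y ∂μ)⁻¹ = C * (C * ∫⁻ y, a y ∂μ)⁻¹ := by
          rw [ENNReal.mul_inv (Or.inl hC0) (Or.inl hC), ← mul_assoc,
            ENNReal.mul_inv_cancel hC0 hC, one_mul]
      _ ≤ C * (∫⁻ y, b y ∂μ)⁻¹ := by gcongr
  rw [← withDensity_smul' _ _ hC, ← withDensity_smul' _ _ hC]
  constructor <;> refine withDensity_mono (Filter.Eventually.of_forall fun x => ?_) <;>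
    simp only [Pi.smul_apply, smul_eq_mul, div_eq_mul_inv]
  · calc a x * (∫⁻ y, a y ∂μ)⁻¹ ≤ b x * (C * (∫⁻ y, b y ∂μ)⁻¹) := mul_le_mul' (hab x) hinv
      _ = C * (b x * (∫⁻ y, b y ∂μ)⁻¹) := by ring
  · calc b x * (∫⁻ y, b y ∂μ)⁻¹ ≤ C * a x * (∫⁻ y, a y ∂μ)⁻¹ :=
          mul_le_mul' (hba x) (ENNReal.inv_le_inv.mpr hZ)
      _ = C * (a x * (∫⁻ y, a y ∂μ)⁻¹) := by ring

/-- Integrals of nonnegative functions are monotone along `μ ≤ c • ν`. -/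
theorem integral_le_mul_integral_of_le_smul {α : Type*} [MeasurableSpace α] {μ ν : Measure α}
    {c : ℝ} (hc : 0 ≤ c) (hμν : μ ≤ ENNReal.ofReal c • ν) {h : α → ℝ} (h0 : ∀ x, 0 ≤ h x)
    (hi : Integrable h ν) : ∫ x, h x ∂μ ≤ c * ∫ x, h x ∂ν := by
  have := integral_mono_measure hμν (Filter.Eventually.of_forall h0)
    (hi.smul_measure ENNReal.ofReal_ne_top)
  rwa [integral_smul_measure, ENNReal.toReal_ofReal hc, smul_eq_mul] at this

/-- For nonnegative `h` integrable w.r.t. both Gibbs measures,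
`e^{−λL²/(2ρ)} E_π[h] ≤ E_{π_λ^ψ}[h] ≤ e^{λL²/(2ρ)} E_π[h]`. -/
theorem stmt7 {d : ℕ} (ρ : ℝ) (hρ : 0 < ρ)
    (ψ : EuclideanSpace ℝ (Fin d) → ℝ)
    (hdiff : Differentiable ℝ ψ)
    (hsc : ∀ y ytil : EuclideanSpace ℝ (Fin d),
      ψ ytil + ⟪gradient ψ ytil, y - ytil⟫ + ρ / 2 * ‖y - ytil‖ ^ 2 ≤ ψ y)
    (L : ℝ) (hL : 0 ≤ L)
    (g : EuclideanSpace ℝ (Fin d) → ℝ)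
    (hg : ∀ x y, |g x - g y| ≤ L * ‖x - y‖)
    (f : EuclideanSpace ℝ (Fin d) → ℝ) (hf : Measurable f)
    (hpos : 0 < ∫⁻ x, ENNReal.ofReal (Real.exp (-(f x + g x))))
    (hfin : (∫⁻ x, ENNReal.ofReal (Real.exp (-(f x + g x)))) < ∞)
    (lam : ℝ) (hlam : 0 < lam)
    (env : EuclideanSpace ℝ (Fin d) → ℝ)
    (henv : env = leftEnv ψ g lam ∨ env = rightEnv ψ g lam)
    (π πlam : Measure (EuclideanSpace ℝ (Fin d)))
    (hπ : π = volume.withDensity fun x =>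
      ENNReal.ofReal (Real.exp (-(f x + g x))) /
        ∫⁻ y, ENNReal.ofReal (Real.exp (-(f y + g y))))
    (hπlam : πlam = volume.withDensity fun x =>
      ENNReal.ofReal (Real.exp (-(f x + env x))) /
        ∫⁻ y, ENNReal.ofReal (Real.exp (-(f y + env y)))) :
    ∀ h : EuclideanSpace ℝ (Fin d) → ℝ, Measurable h → (∀ x, 0 ≤ h x) →
      Integrable h π → Integrable h πlam →
      Real.exp (-(lam * L ^ 2 / (2 * ρ))) * ∫ x, h x ∂π ≤ ∫ x, h x ∂πlam ∧
      (∫ x, h x ∂πlam) ≤ Real.exp (lam * L ^ 2 / (2 * ρ)) * ∫ x, h x ∂π := by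
  intro h _ h0 hiπ hilam
  set c := lam * L ^ 2 / (2 * ρ)
  have hbounds : ∀ x, env x ≤ g x ∧ g x ≤ env x + c := by
    intro x
    rcases henv with rfl | rfl
    · refine iInf_add_penalty_bounds (D := fun y => bregmanDiv ψ y x) hρ hlam x (hg x)
        (by simp [bregmanDiv]) fun y => ?_
      rw [norm_sub_rev, bregmanDiv]
      linarith [hsc y x]
    · refine iInf_add_penalty_bounds (D := fun y => bregmanDiv ψ x y) hρ hlam x (hg x)
        (by simp [bregmanDiv]) fun y => ?_
      rw [bregmanDiv]
      linarith [hsc x y]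
  have hdom := withDensity_normalized_le_smul
    (μ := (volume : Measure (EuclideanSpace ℝ (Fin d))))
    (a := fun x => ENNReal.ofReal (Real.exp (-(f x + g x))))
    (b := fun x => ENNReal.ofReal (Real.exp (-(f x + env x))))
    (C := ENNReal.ofReal (Real.exp c))
    (ENNReal.ofReal_pos.mpr (Real.exp_pos c)).ne' ENNReal.ofReal_ne_top
    (fun x => ENNReal.ofReal_le_ofReal (Real.exp_le_exp.mpr (by linarith [(hbounds x).1])))
    (fun x => by
      rw [← ENNReal.ofReal_mul (Real.exp_pos c).le, ← Real.exp_add]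
      exact ENNReal.ofReal_le_ofReal (Real.exp_le_exp.mpr (by linarith [(hbounds x).2])))
  rw [← hπ, ← hπlam] at hdom
  refine ⟨?_, integral_le_mul_integral_of_le_smul (Real.exp_pos c).le hdom.2 h0 hiπ⟩
  rw [Real.exp_neg, inv_mul_le_iff₀ (Real.exp_pos c)]
  exact integral_le_mul_integral_of_le_smul (Real.exp_pos c).le hdom.1 h0 hilam
end

section
/- Let ψ : ℝ^d → ℝ be twice continuously differentiable and strictly convex, let g : ℝ^d → ℝ ∪ {+∞} be proper, lower semicontinuous, and bounded below, and let λ > 0. Suppose that for each y ∈ ℝ^d the function y' ↦ g(y') + (1/λ)·D_ψ(y', y) attains its infimum at a unique point p(y) ∈ ℝ^d, and that the map p : ℝ^d → ℝ^d is continuous. Then the left Bregman–Moreau envelope env←_{λ,g}^ψ is continuously differentiable on ℝ^d with ∇env←_{λ,g}^ψ(y) = (1/λ) · ∇²ψ(y) · (y − p(y)) for every y ∈ ℝ^d. -/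
open scoped RealInnerProductSpace

/-- The left Bregman–Moreau envelope of an extended-real-valued `g` associated with `ψ`. -/
noncomputable def leftEnvE {d : ℕ} (ψ : EuclideanSpace ℝ (Fin d) → ℝ)
    (g : EuclideanSpace ℝ (Fin d) → EReal) (lam : ℝ)
    (x : EuclideanSpace ℝ (Fin d)) : EReal :=
  ⨅ y : EuclideanSpace ℝ (Fin d), (g y + ((1 / lam * bregmanDiv ψ y x : ℝ) : EReal))

section Gradient

variable {E : Type*} [NormedAddCommGroup E] [InnerProductSpace ℝ E]

theorem ContDiff.gradient_one [CompleteSpace E] {f : E → ℝ} (hf : ContDiff ℝ 2 f) :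
    ContDiff ℝ 1 (gradient f) :=
  (InnerProductSpace.toDual ℝ E).symm.contDiff.comp (hf.fderiv_right (m := 1) (by norm_num))

theorem inner_fderiv_gradient [CompleteSpace E] {f : E → ℝ} (hf : ContDiff ℝ 2 f) (x v w : E) :
    ⟪fderiv ℝ (gradient f) x v, w⟫ = fderiv ℝ (fderiv ℝ f) x v w := by
  have h : HasFDerivAt (fderiv ℝ f) (fderiv ℝ (fderiv ℝ f) x) x :=
    (((hf.fderiv_right (m := 1) (by norm_num)).differentiable (by norm_num)) x).hasFDerivAt
  have hg : HasFDerivAt (gradient f) _ x :=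
    (InnerProductSpace.toDual ℝ E).symm.toContinuousLinearEquiv.hasFDerivAt.comp x h
  rw [hg.fderiv]
  exact InnerProductSpace.toDual_symm_apply

theorem inner_fderiv_gradient_comm [CompleteSpace E] {f : E → ℝ}
    (hf : ContDiff ℝ 2 f) (x v w : E) :
    ⟪fderiv ℝ (gradient f) x v, w⟫ = ⟪fderiv ℝ (gradient f) x w, v⟫ := by
  rw [inner_fderiv_gradient hf, inner_fderiv_gradient hf]
  exact hf.contDiffAt.isSymmSndFDerivAt (by simp) v w

/-- The inner product of an `O(y - x)` increment and an `o(1)` increment is `o(y - x)`. -/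
theorem isLittleO_inner_sub_sub {u p : E → E} {x : E} (hu : DifferentiableAt ℝ u x)
    (hp : ContinuousAt p x) :
    (fun y => ⟪u y - u x, p y - p x⟫) =o[nhds x] fun y => y - x := by
  have h1 : (fun y => u y - u x) =O[nhds x] fun y => y - x := hu.hasFDerivAt.isBigO_sub
  have h2 : (fun y => p y - p x) =o[nhds x] fun _ => (1 : ℝ) := by
    rw [Asymptotics.isLittleO_one_iff]
    exact tendsto_sub_nhds_zero_iff.2 hp
  have h3 : (fun y => ‖u y - u x‖ * ‖p y - p x‖) =o[nhds x] fun y => ‖y - x‖ * (1 : ℝ) :=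
    h1.norm_norm.mul_isLittleO h2.norm_left
  refine Asymptotics.IsLittleO.of_norm_right ?_
  simp only [mul_one] at h3
  refine Asymptotics.IsBigO.trans_isLittleO (Asymptotics.IsBigO.of_bound 1 ?_) h3
  filter_upwards with y
  rw [one_mul, norm_mul, norm_norm, norm_norm]
  exact norm_inner_le_norm _ _

end Gradient

section Bregman

variable {d : ℕ} {ψ : EuclideanSpace ℝ (Fin d) → ℝ}

/-- The gradient of the Bregman divergence in its second argument. -/
theorem hasGradientAt_bregmanDiv_right (hψ : ContDiff ℝ 2 ψ) (z x : EuclideanSpace ℝ (Fin d)) :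
    HasGradientAt (bregmanDiv ψ z) (fderiv ℝ (gradient ψ) x (x - z)) x := by
  have hg : HasFDerivAt (gradient ψ) (fderiv ℝ (gradient ψ) x) x :=
    ((hψ.gradient_one.differentiable (by norm_num)) x).hasFDerivAt
  have hf : HasGradientAt ψ (gradient ψ x) x :=
    ((hψ.differentiable (by norm_num)) x).hasGradientAt
  rw [hasGradientAt_iff_hasFDerivAt] at hf ⊢
  have h := (hf.const_sub (ψ z)).sub (hg.inner ℝ ((hasFDerivAt_id x).const_sub z))
  refine h.congr_fderiv ?_
  ext v
  have hs := inner_fderiv_gradient_comm hψ x v (x - z)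
  have hn : ⟪fderiv ℝ (gradient ψ) x v, z - x⟫ = -⟪fderiv ℝ (gradient ψ) x v, x - z⟫ := by
    rw [← inner_neg_right, neg_sub]
  simp [fderivInnerCLM_apply, -map_sub, hn, hs]

/-- The four-point identity for the Bregman divergence. -/
theorem bregmanDiv_four_point (a b x y : EuclideanSpace ℝ (Fin d)) :
    bregmanDiv ψ a y - bregmanDiv ψ a x - (bregmanDiv ψ b y - bregmanDiv ψ b x) =
      -⟪gradient ψ y - gradient ψ x, a - b⟫ := by
  simp only [bregmanDiv, inner_sub_left, inner_sub_right]
  ring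

theorem leftEnvE_eq_of_isMin {g : EuclideanSpace ℝ (Fin d) → EReal} {lam : ℝ}
    {x q : EuclideanSpace ℝ (Fin d)}
    (hmin : ∀ y', g q + ((1 / lam * bregmanDiv ψ q x : ℝ) : EReal) ≤
      g y' + ((1 / lam * bregmanDiv ψ y' x : ℝ) : EReal)) :
    leftEnvE ψ g lam x = g q + ((1 / lam * bregmanDiv ψ q x : ℝ) : EReal) :=
  le_antisymm (iInf_le _ q) (le_iInf hmin)

/-- A value function with continuous minimizers has the gradient of the objective
with the minimizer frozen. -/
theorem hasGradientAt_of_bregman_minimizer (hψ : ContDiff ℝ 2 ψ)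
    {F G : EuclideanSpace ℝ (Fin d) → ℝ}
    {p : EuclideanSpace ℝ (Fin d) → EuclideanSpace ℝ (Fin d)} {c : ℝ}
    (hF : ∀ y, F y = G y + c * bregmanDiv ψ (p y) y)
    (hle : ∀ x y, F y ≤ G x + c * bregmanDiv ψ (p x) y)
    {x : EuclideanSpace ℝ (Fin d)} (hp : ContinuousAt p x) :
    HasGradientAt F (c • fderiv ℝ (gradient ψ) x (x - p x)) x := by
  have hD := (hasGradientAt_iff_hasFDerivAt.1
    (hasGradientAt_bregmanDiv_right hψ (p x) x)).const_mul c
  have hu : DifferentiableAt ℝ (gradient ψ) x :=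
    (hψ.gradient_one.differentiable (by norm_num)) x
  have hr : HasFDerivAt (fun y => F y - c * bregmanDiv ψ (p x) y)
      (0 : EuclideanSpace ℝ (Fin d) →L[ℝ] ℝ) x := by
    refine .of_isLittleO ?_
    refine Asymptotics.IsBigO.trans_isLittleO (Asymptotics.IsBigO.of_bound |c| ?_)
      (isLittleO_inner_sub_sub hu hp)
    filter_upwards with y
    have h1 := hle x y
    have h2 := hle y x
    have h3 := hF x
    have h4 := hF y
    have h5 := congrArg (c * ·) (bregmanDiv_four_point (ψ := ψ) (p y) (p x) x y)
    rw [Real.norm_eq_abs, Real.norm_eq_abs, ← abs_mul, zero_apply, sub_zero]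
    rw [abs_of_nonpos (by linarith)]
    exact le_trans (by linarith) (le_abs_self _)
  rw [hasGradientAt_iff_hasFDerivAt]
  refine ((hr.add hD).congr_fderiv ?_).congr_of_eventuallyEq (.of_forall fun y => ?_)
  · simp
  · simp

end Bregman

/-- If the left Bregman proximity operator `p` is single-valued and continuous, then
the left Bregman–Moreau envelope is continuously differentiable with
`∇env←_{λ,g}^ψ(y) = (1/λ)·∇²ψ(y)(y − p(y))`. -/
theorem stmt9 {d : ℕ} (ψ : EuclideanSpace ℝ (Fin d) → ℝ)
    (hψ : ContDiff ℝ 2 ψ) (hstrict : StrictConvexOn ℝ Set.univ ψ)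
    (g : EuclideanSpace ℝ (Fin d) → EReal)
    (hproper : ∃ x, g x ≠ ⊤)
    (hlsc : LowerSemicontinuous g)
    (hbdd : ∃ c : ℝ, ∀ x, (c : EReal) ≤ g x)
    (lam : ℝ) (hlam : 0 < lam)
    (p : EuclideanSpace ℝ (Fin d) → EuclideanSpace ℝ (Fin d))
    (hmin : ∀ y y', g (p y) + ((1 / lam * bregmanDiv ψ (p y) y : ℝ) : EReal) ≤
      g y' + ((1 / lam * bregmanDiv ψ y' y : ℝ) : EReal))
    (huniq : ∀ y y', g y' + ((1 / lam * bregmanDiv ψ y' y : ℝ) : EReal) =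
      g (p y) + ((1 / lam * bregmanDiv ψ (p y) y : ℝ) : EReal) → y' = p y)
    (hp : Continuous p) :
    ContDiff ℝ 1 (fun y => (leftEnvE ψ g lam y).toReal) ∧
    ∀ y : EuclideanSpace ℝ (Fin d),
      HasGradientAt (fun y' => (leftEnvE ψ g lam y').toReal)
        ((1 / lam) • (fderiv ℝ (gradient ψ) y (y - p y))) y := by
  obtain ⟨c, hc⟩ := hbdd
  obtain ⟨x₀, hx₀⟩ := hproper
  have hbot : ∀ y, g y ≠ ⊥ := fun y h => by simpa [h] using hc y
  have htop : ∀ y, g (p y) ≠ ⊤ := by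
    intro y h
    have := hmin y x₀
    rw [h, EReal.top_add_coe, top_le_iff] at this
    exact EReal.add_ne_top hx₀ (EReal.coe_ne_top _) this
  have hcoe : ∀ y, ((g (p y)).toReal : EReal) = g (p y) := fun y =>
    EReal.coe_toReal (htop y) (hbot _)
  have hE : ∀ y, leftEnvE ψ g lam y =
      (((g (p y)).toReal + 1 / lam * bregmanDiv ψ (p y) y : ℝ) : EReal) := fun y => by
    rw [leftEnvE_eq_of_isMin (hmin y), EReal.coe_add, hcoe]
  have hF : ∀ y, (leftEnvE ψ g lam y).toReal =
      (g (p y)).toReal + 1 / lam * bregmanDiv ψ (p y) y := fun y => by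
    rw [hE, EReal.toReal_coe]
  have hle : ∀ x y, (leftEnvE ψ g lam y).toReal ≤
      (g (p x)).toReal + 1 / lam * bregmanDiv ψ (p x) y := fun x y => by
    rw [hF, ← EReal.coe_le_coe_iff, EReal.coe_add, EReal.coe_add, hcoe, hcoe]
    exact hmin y (p x)
  have hgrad : ∀ y, HasGradientAt (fun y' => (leftEnvE ψ g lam y').toReal)
      ((1 / lam) • (fderiv ℝ (gradient ψ) y (y - p y))) y := fun y =>
    hasGradientAt_of_bregman_minimizer hψ hF hle hp.continuousAt
  refine ⟨?_, hgrad⟩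
  refine contDiff_one_iff_hasFDerivAt.2 ⟨_, ?_, fun y => (hgrad y).hasFDerivAt⟩
  have hH : Continuous fun y => fderiv ℝ (gradient ψ) y (y - p y) :=
    (hψ.gradient_one.continuous_fderiv (by norm_num)).clm_apply (continuous_id.sub hp)
  exact (InnerProductSpace.toDual ℝ _).continuous.comp (hH.const_smul (1 / lam))
end

section
/- Let ψ : ℝ^d → ℝ be twice continuously differentiable and strictly convex, let g : ℝ^d → ℝ ∪ {+∞} be proper, lower semicontinuous, and bounded below, and let λ > 0. Suppose that for each y ∈ ℝ^d the function y' ↦ g(y') + (1/λ)·D_ψ(y, y') attains its infimum at a unique point q(y) ∈ ℝ^d, and that the map q : ℝ^d → ℝ^d is continuous. Then the right Bregman–Moreau envelope env→_{λ,g}^ψ is continuously differentiable on ℝ^d with ∇env→_{λ,g}^ψ(y) = (1/λ) · (∇ψ(y) − ∇ψ(q(y))) for every y ∈ ℝ^d. -/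
open scoped RealInnerProductSpace

/-- The right Bregman–Moreau envelope of an extended-real-valued `g` associated with `ψ`. -/
noncomputable def rightEnvE {d : ℕ} (ψ : EuclideanSpace ℝ (Fin d) → ℝ)
    (g : EuclideanSpace ℝ (Fin d) → EReal) (lam : ℝ)
    (x : EuclideanSpace ℝ (Fin d)) : EReal :=
  ⨅ y : EuclideanSpace ℝ (Fin d), (g y + ((1 / lam * bregmanDiv ψ x y : ℝ) : EReal))

open Asymptotics Filter Topology

/-- If the increments of `e` are bounded above by those of `φ` minus a linear term whose slope `p`
depends continuously on the base point, then `e` is differentiable wherever `φ` is. -/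
theorem hasGradientAt_of_sub_le {E : Type*} [NormedAddCommGroup E] [InnerProductSpace ℝ E]
    [CompleteSpace E] {e φ : E → ℝ} {p : E → E} {a y : E}
    (h : ∀ x z, e x - e z ≤ φ x - φ z - ⟪p z, x - z⟫)
    (hφ : HasGradientAt φ a y) (hp : ContinuousAt p y) :
    HasGradientAt e (a - p y) y := by
  rw [hasGradientAt_iff_isLittleO] at hφ ⊢
  have hp' : (fun x => ‖p x - p y‖ * ‖x - y‖) =o[𝓝 y] fun x => x - y := by
    have h0 : (fun x => ‖p x - p y‖) =o[𝓝 y] fun _ => (1 : ℝ) := by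
      rw [isLittleO_one_iff]
      exact tendsto_iff_norm_sub_tendsto_zero.mp hp
    have := h0.mul_isBigO (isBigO_refl (fun x => ‖x - y‖) (𝓝 y))
    simpa using this
  refine IsBigO.trans_isLittleO ?_ (hφ.norm_left.add hp')
  refine IsBigO.of_bound 1 (Eventually.of_forall fun x => ?_)
  have h₁ := h x y
  have h₂ := h y x
  have h₃ : |⟪p x - p y, x - y⟫| ≤ ‖p x - p y‖ * ‖x - y‖ := abs_real_inner_le_norm _ _
  have h₄ : ⟪p x, y - x⟫ = -⟪p x, x - y⟫ := by rw [← neg_sub x y, inner_neg_right]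
  rw [inner_sub_left] at h₃
  rw [h₄] at h₂
  rw [one_mul, Real.norm_eq_abs, Real.norm_eq_abs, inner_sub_left]
  refine le_trans ?_ (le_abs_self _)
  rw [Real.norm_eq_abs]
  have h₅ := abs_le.mp h₃
  have h₆ := le_abs_self (φ x - φ y - ⟪a, x - y⟫)
  have h₇ := neg_abs_le (φ x - φ y - ⟪a, x - y⟫)
  have h₈ : 0 ≤ ‖p x - p y‖ * ‖x - y‖ := by positivity
  rw [abs_le]
  constructor <;> linarith

/-- A function with a continuous gradient is continuously differentiable. -/
theorem contDiff_one_of_hasGradientAt {E : Type*} [NormedAddCommGroup E] [InnerProductSpace ℝ E]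
    [CompleteSpace E] {e : E → ℝ} {v : E → E} (h : ∀ y, HasGradientAt e (v y) y)
    (hv : Continuous v) : ContDiff ℝ 1 e := by
  rw [contDiff_one_iff_fderiv]
  refine ⟨fun y => (h y).differentiableAt, ?_⟩
  have : fderiv ℝ e = fun y => InnerProductSpace.toDual ℝ E (v y) :=
    funext fun y => (h y).hasFDerivAt.fderiv
  rw [this]
  exact (InnerProductSpace.toDual ℝ E).continuous.comp hv

/-- The gradient of a continuously differentiable function is continuous. -/
theorem ContDiff.continuous_gradient {E : Type*} [NormedAddCommGroup E] [InnerProductSpace ℝ E]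
    [CompleteSpace E] {f : E → ℝ} (hf : ContDiff ℝ 1 f) : Continuous (gradient f) :=
  (InnerProductSpace.toDual ℝ E).symm.continuous.comp (hf.continuous_fderiv one_ne_zero)

/-- If the right Bregman proximity operator `q` is single-valued and continuous, then
the right Bregman–Moreau envelope is continuously differentiable with
`∇env→_{λ,g}^ψ(y) = (1/λ)·(∇ψ(y) − ∇ψ(q(y)))`. -/
theorem stmt10 {d : ℕ} (ψ : EuclideanSpace ℝ (Fin d) → ℝ)
    (hψ : ContDiff ℝ 2 ψ) (hstrict : StrictConvexOn ℝ Set.univ ψ)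
    (g : EuclideanSpace ℝ (Fin d) → EReal)
    (hproper : ∃ x, g x ≠ ⊤)
    (hlsc : LowerSemicontinuous g)
    (hbdd : ∃ c : ℝ, ∀ x, (c : EReal) ≤ g x)
    (lam : ℝ) (hlam : 0 < lam)
    (q : EuclideanSpace ℝ (Fin d) → EuclideanSpace ℝ (Fin d))
    (hmin : ∀ y y', g (q y) + ((1 / lam * bregmanDiv ψ y (q y) : ℝ) : EReal) ≤
      g y' + ((1 / lam * bregmanDiv ψ y y' : ℝ) : EReal))
    (huniq : ∀ y y', g y' + ((1 / lam * bregmanDiv ψ y y' : ℝ) : EReal) =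
      g (q y) + ((1 / lam * bregmanDiv ψ y (q y) : ℝ) : EReal) → y' = q y)
    (hq : Continuous q) :
    ContDiff ℝ 1 (fun y => (rightEnvE ψ g lam y).toReal) ∧
    ∀ y : EuclideanSpace ℝ (Fin d),
      HasGradientAt (fun y' => (rightEnvE ψ g lam y').toReal)
        ((1 / lam) • (gradient ψ y - gradient ψ (q y))) y := by
  have hbot : ∀ x, g x ≠ ⊥ := by
    obtain ⟨c, hc⟩ := hbdd
    intro x hx
    simpa [hx] using hc x
  have htop : ∀ y, g (q y) ≠ ⊤ := by
    obtain ⟨x₀, hx₀⟩ := hproper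
    intro y hy
    have h := hmin y x₀
    rw [hy, EReal.top_add_coe, top_le_iff] at h
    exact (EReal.add_lt_top hx₀ (EReal.coe_ne_top _)).ne h
  have hcoe : ∀ y, ((g (q y)).toReal : EReal) = g (q y) := fun y =>
    EReal.coe_toReal (htop y) (hbot _)
  have henv : ∀ y, rightEnvE ψ g lam y =
      (((g (q y)).toReal + 1 / lam * bregmanDiv ψ y (q y) : ℝ) : EReal) := by
    intro y
    rw [EReal.coe_add, hcoe]
    exact le_antisymm (iInf_le _ (q y)) (le_iInf (hmin y))
  have hsub : ∀ x z, (rightEnvE ψ g lam x).toReal - (rightEnvE ψ g lam z).toReal ≤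
      (1 / lam) * ψ x - (1 / lam) * ψ z - ⟪(1 / lam) • gradient ψ (q z), x - z⟫ := by
    intro x z
    have h := hmin x (q z)
    rw [← hcoe x, ← hcoe z, ← EReal.coe_add, ← EReal.coe_add, EReal.coe_le_coe_iff] at h
    have hdiv : bregmanDiv ψ x (q z) - bregmanDiv ψ z (q z) =
        ψ x - ψ z - ⟪gradient ψ (q z), x - z⟫ := by
      simp only [bregmanDiv, inner_sub_right]
      ring
    rw [henv, henv, EReal.toReal_coe, EReal.toReal_coe, real_inner_smul_left]
    linear_combination h + (1 / lam) * hdiv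
  have hgrad : Continuous (gradient ψ) := (hψ.of_le one_le_two).continuous_gradient
  have hmain : ∀ y, HasGradientAt (fun y' => (rightEnvE ψ g lam y').toReal)
      ((1 / lam) • (gradient ψ y - gradient ψ (q y))) y := by
    intro y
    rw [smul_sub]
    have hψy : HasGradientAt (fun x => (1 / lam) * ψ x) ((1 / lam) • gradient ψ y) y := by
      have := ((hψ.differentiable two_ne_zero) y).hasGradientAt.hasFDerivAt.const_mul (1 / lam)
      rw [hasGradientAt_iff_hasFDerivAt, map_smul]
      exact this
    exact hasGradientAt_of_sub_le (p := fun z => (1 / lam) • gradient ψ (q z)) hsub hψy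
      (by fun_prop)
  exact ⟨contDiff_one_of_hasGradientAt hmain (by fun_prop), hmain⟩
end

section
/- Let σ > 0, α > 0, λ > 0, and let ψ_σ : ℝ → ℝ be the hyperbolic entropy ψ_σ(θ) := θ·arsinh(θ/σ) − √(θ² + σ²). For each θ ∈ ℝ, the function ϑ ↦ α|ϑ| + (1/λ)·D_{ψ_σ}(ϑ, θ) attains its infimum at the unique point: σ·sinh(arsinh(θ/σ) − αλ) if θ > σ·sinh(αλ); σ·sinh(arsinh(θ/σ) + αλ) if θ < −σ·sinh(αλ); and 0 if |θ| ≤ σ·sinh(αλ). -/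
/-- The one-dimensional Bregman divergence associated with a differentiable `ψ : ℝ → ℝ`. -/
noncomputable def bregmanDiv1 (ψ : ℝ → ℝ) (x y : ℝ) : ℝ :=
  ψ x - ψ y - deriv ψ y * (x - y)

/-- The hyperbolic entropy with parameter `σ > 0`. -/
noncomputable def hypEnt (σ θ : ℝ) : ℝ :=
  θ * Real.arsinh (θ / σ) - Real.sqrt (θ ^ 2 + σ ^ 2)

/-- The claimed minimizer of `ϑ ↦ α|ϑ| + (1/λ)·D_{ψ_σ}(ϑ, θ)`. -/
noncomputable def bregProxPt (σ α lam θ : ℝ) : ℝ :=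
  if σ * Real.sinh (α * lam) < θ then σ * Real.sinh (Real.arsinh (θ / σ) - α * lam)
  else if θ < -(σ * Real.sinh (α * lam)) then σ * Real.sinh (Real.arsinh (θ / σ) + α * lam)
  else 0

theorem cosh_add_sinh_mul_sub_lt_cosh {u v : ℝ} (h : v ≠ u) :
    Real.cosh u + Real.sinh u * (v - u) < Real.cosh v := by
  have key : ∀ {a b : ℝ}, b ≠ a → Real.exp a * (b - a + 1) < Real.exp b := fun {a b} hab => by
    calc Real.exp a * (b - a + 1) < Real.exp a * Real.exp (b - a) :=
          mul_lt_mul_of_pos_left (Real.add_one_lt_exp (sub_ne_zero.2 hab)) (Real.exp_pos a)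
      _ = Real.exp b := by rw [← Real.exp_add, add_sub_cancel]
  have h₁ := key h
  have h₂ := key (neg_injective.ne h)
  rw [Real.cosh_eq, Real.cosh_eq, Real.sinh_eq]
  linarith

theorem sqrt_mul_sinh_sq_add_sq {σ : ℝ} (hσ : 0 < σ) (u : ℝ) :
    Real.sqrt ((σ * Real.sinh u) ^ 2 + σ ^ 2) = σ * Real.cosh u := by
  rw [show (σ * Real.sinh u) ^ 2 + σ ^ 2 = (σ * Real.cosh u) ^ 2 by
    rw [mul_pow σ (Real.cosh u), Real.cosh_sq]; ring]
  exact Real.sqrt_sq (mul_pos hσ (Real.cosh_pos u)).le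

theorem hypEnt_mul_sinh {σ : ℝ} (hσ : 0 < σ) (u : ℝ) :
    hypEnt σ (σ * Real.sinh u) = σ * (u * Real.sinh u - Real.cosh u) := by
  rw [hypEnt, sqrt_mul_sinh_sq_add_sq hσ, mul_div_cancel_left₀ _ hσ.ne', Real.arsinh_sinh]
  ring

theorem mul_sinh_arsinh_div {σ : ℝ} (hσ : 0 < σ) (x : ℝ) :
    σ * Real.sinh (Real.arsinh (x / σ)) = x := by
  rw [Real.sinh_arsinh, mul_div_cancel₀ _ hσ.ne']

/-- Strict convexity of the hyperbolic entropy, as a strict tangent-line inequality. -/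
theorem hypEnt_add_arsinh_mul_lt {σ x p : ℝ} (hσ : 0 < σ) (h : x ≠ p) :
    hypEnt σ p + Real.arsinh (p / σ) * (x - p) < hypEnt σ x := by
  obtain ⟨u, rfl⟩ : ∃ u, σ * Real.sinh u = x := ⟨_, mul_sinh_arsinh_div hσ x⟩
  obtain ⟨v, rfl⟩ : ∃ v, σ * Real.sinh v = p := ⟨_, mul_sinh_arsinh_div hσ p⟩
  have huv : v ≠ u := by rintro rfl; exact h rfl
  rw [hypEnt_mul_sinh hσ, hypEnt_mul_sinh hσ, mul_div_cancel_left₀ _ hσ.ne', Real.arsinh_sinh]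
  have := mul_lt_mul_of_pos_left (cosh_add_sinh_mul_sub_lt_cosh huv) hσ
  linarith

theorem hasDerivAt_hypEnt {σ : ℝ} (hσ : 0 < σ) (θ : ℝ) :
    HasDerivAt (hypEnt σ) (Real.arsinh (θ / σ)) θ := by
  have hpos : 0 < θ ^ 2 + σ ^ 2 := by positivity
  have hsqrt : Real.sqrt (1 + (θ / σ) ^ 2) = Real.sqrt (θ ^ 2 + σ ^ 2) / σ := by
    rw [show 1 + (θ / σ) ^ 2 = (θ ^ 2 + σ ^ 2) / σ ^ 2 by field_simp; ring,
      Real.sqrt_div hpos.le, Real.sqrt_sq hσ.le]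
  have h₁ := (hasDerivAt_id θ).mul ((hasDerivAt_id θ).div_const σ).arsinh
  have h₂ := (((hasDerivAt_id θ).pow 2).add_const (σ ^ 2)).sqrt hpos.ne'
  have hne := (Real.sqrt_pos.2 hpos).ne'
  refine (h₁.sub h₂).congr_deriv ?_
  simp only [id, Pi.pow_apply, smul_eq_mul, hsqrt]
  field_simp
  ring

theorem mul_sinh_lt_iff {σ : ℝ} (hσ : 0 < σ) (c θ : ℝ) :
    σ * Real.sinh c < θ ↔ c < Real.arsinh (θ / σ) := by
  rw [← Real.sinh_lt_sinh (x := c), Real.sinh_arsinh, lt_div_iff₀' hσ]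

theorem lt_mul_sinh_iff {σ : ℝ} (hσ : 0 < σ) (c θ : ℝ) :
    θ < σ * Real.sinh c ↔ Real.arsinh (θ / σ) < c := by
  rw [← Real.sinh_lt_sinh (y := c), Real.sinh_arsinh, div_lt_iff₀' hσ]

/-- First-order optimality: the scaled difference of mirror images is a subgradient of `α * |·|` at the
point `p = bregProxPt σ α lam θ`. -/
theorem bregProxPt_subgradient {σ α lam : ℝ} (hσ : 0 < σ) (hα : 0 < α) (hlam : 0 < lam)
    (θ x : ℝ) :
    (Real.arsinh (θ / σ) - Real.arsinh (bregProxPt σ α lam θ / σ)) *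
        (x - bregProxPt σ α lam θ) ≤
      α * lam * (|x| - |bregProxPt σ α lam θ|) := by
  have hc : 0 < α * lam := mul_pos hα hlam
  simp only [bregProxPt, ← mul_neg, ← Real.sinh_neg, mul_sinh_lt_iff hσ, lt_mul_sinh_iff hσ]
  split_ifs with h₁ h₂
  · have hp : 0 < σ * Real.sinh (Real.arsinh (θ / σ) - α * lam) :=
      mul_pos hσ (Real.sinh_pos_iff.2 (sub_pos.2 h₁))
    rw [abs_of_pos hp, mul_div_cancel_left₀ _ hσ.ne', Real.arsinh_sinh, sub_sub_cancel]
    gcongr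
    exact le_abs_self x
  · have hp : σ * Real.sinh (Real.arsinh (θ / σ) + α * lam) < 0 :=
      mul_neg_of_pos_of_neg hσ (Real.sinh_neg_iff.2 (by linarith))
    rw [abs_of_neg hp, mul_div_cancel_left₀ _ hσ.ne', Real.arsinh_sinh]
    have := mul_le_mul_of_nonneg_left (neg_le_abs x) hc.le
    linarith
  · have ha : |Real.arsinh (θ / σ)| ≤ α * lam := abs_le.2 ⟨by linarith, not_lt.1 h₁⟩
    simp only [zero_div, Real.arsinh_zero, sub_zero, abs_zero]
    calc Real.arsinh (θ / σ) * x ≤ |Real.arsinh (θ / σ)| * |x| := by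
          rw [← abs_mul]; exact le_abs_self _
      _ ≤ α * lam * |x| := by gcongr

theorem bregProxPt_objective_lt {σ α lam : ℝ} (hσ : 0 < σ) (hα : 0 < α) (hlam : 0 < lam)
    {θ x : ℝ} (hx : x ≠ bregProxPt σ α lam θ) :
    α * |bregProxPt σ α lam θ| +
        (1 / lam) * bregmanDiv1 (hypEnt σ) (bregProxPt σ α lam θ) θ <
      α * |x| + (1 / lam) * bregmanDiv1 (hypEnt σ) x θ := by
  have hsub := bregProxPt_subgradient hσ hα hlam θ x
  have htan := hypEnt_add_arsinh_mul_lt hσ hx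
  refine lt_of_mul_lt_mul_left ?_ hlam.le
  simp only [bregmanDiv1, (hasDerivAt_hypEnt hσ θ).deriv, mul_add, ← mul_assoc,
    mul_one_div_cancel hlam.ne', one_mul]
  linarith

/-- The left Bregman proximity operator of `α|·|` associated with the hyperbolic
entropy `ψ_σ`: the function `ϑ ↦ α|ϑ| + (1/λ)·D_{ψ_σ}(ϑ, θ)` attains its infimum at
the unique point given by the explicit formula `bregProxPt`. -/
theorem stmt11 (σ α lam : ℝ) (hσ : 0 < σ) (hα : 0 < α) (hlam : 0 < lam) :
    ∀ θ : ℝ,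
      (∀ ϑ : ℝ,
        α * |bregProxPt σ α lam θ| +
            (1 / lam) * bregmanDiv1 (hypEnt σ) (bregProxPt σ α lam θ) θ ≤
          α * |ϑ| + (1 / lam) * bregmanDiv1 (hypEnt σ) ϑ θ) ∧
      (∀ ϑ : ℝ,
        (∀ ϑ' : ℝ, α * |ϑ| + (1 / lam) * bregmanDiv1 (hypEnt σ) ϑ θ ≤
          α * |ϑ'| + (1 / lam) * bregmanDiv1 (hypEnt σ) ϑ' θ) →
        ϑ = bregProxPt σ α lam θ) := by
  intro θ
  refine ⟨fun ϑ => ?_, fun ϑ h => ?_⟩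
  · rcases eq_or_ne ϑ (bregProxPt σ α lam θ) with rfl | hne
    · exact le_rfl
    · exact (bregProxPt_objective_lt hσ hα hlam hne).le
  · by_contra hne
    exact (bregProxPt_objective_lt hσ hα hlam hne).not_ge (h _)
end

section
/- Let α > 0 and λ > 0 with αλ < 1, and let D_exp(ϑ, θ) := e^ϑ − e^θ − e^θ·(ϑ − θ) be the Bregman divergence of the exponential function on ℝ. For each θ ∈ ℝ, the function ϑ ↦ α|ϑ| + (1/λ)·D_exp(ϑ, θ) attains its infimum at the unique point: log(e^θ − αλ) if θ > log(1 + αλ); log(e^θ + αλ) if θ < log(1 − αλ); and 0 if log(1 − αλ) ≤ θ ≤ log(1 + αλ). -/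
/-- The Bregman divergence of the exponential function on `ℝ`. -/
noncomputable def expDiv (x y : ℝ) : ℝ :=
  Real.exp x - Real.exp y - Real.exp y * (x - y)

/-- The claimed minimizer of `ϑ ↦ α|ϑ| + (1/λ)·D_exp(ϑ, θ)`. -/
noncomputable def expProxPt (α lam θ : ℝ) : ℝ :=
  if Real.log (1 + α * lam) < θ then Real.log (Real.exp θ - α * lam)
  else if θ < Real.log (1 - α * lam) then Real.log (Real.exp θ + α * lam)
  else 0

/-- The Bregman divergence of `exp` is positive off the diagonal. -/
lemma expDiv_pos {x y : ℝ} (h : x ≠ y) : 0 < expDiv x y := by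
  have h₁ := Real.add_one_lt_exp (sub_ne_zero.mpr h)
  have h₂ : Real.exp x = Real.exp y * Real.exp (x - y) := by
    rw [← Real.exp_add, add_sub_cancel]
  have h₃ := mul_lt_mul_of_pos_left h₁ (Real.exp_pos y)
  unfold expDiv
  linarith

/-- Three-point identity for the Bregman divergence of `exp`. -/
lemma expDiv_eq_add (x p y : ℝ) :
    expDiv x y = expDiv p y + expDiv x p - (Real.exp y - Real.exp p) * (x - p) := by
  unfold expDiv
  ring

/-- First-order optimality condition: `(e^θ - e^p) / λ` is a subgradient of `α|·|` at
`p = expProxPt α λ θ`. -/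
lemma exp_sub_exp_expProxPt_mul_le {α lam : ℝ} (hα : 0 < α) (hlam : 0 < lam)
    (h1 : α * lam < 1) (θ x : ℝ) :
    (Real.exp θ - Real.exp (expProxPt α lam θ)) * (x - expProxPt α lam θ) ≤
      α * lam * (|x| - |expProxPt α lam θ|) := by
  have hc : 0 < α * lam := mul_pos hα hlam
  unfold expProxPt
  split_ifs with hpos hneg
  · have hθ : 1 + α * lam < Real.exp θ := (Real.log_lt_iff_lt_exp (by linarith)).mp hpos
    rw [Real.exp_log (by linarith), abs_of_pos (Real.log_pos (by linarith)), sub_sub_cancel]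
    gcongr
    exact le_abs_self x
  · have hθ : Real.exp θ < 1 - α * lam := (Real.lt_log_iff_exp_lt (by linarith)).mp hneg
    have hexp := Real.exp_pos θ
    rw [Real.exp_log (by linarith),
      abs_of_neg (Real.log_neg (by linarith) (by linarith))]
    nlinarith [mul_le_mul_of_nonneg_left (neg_le_abs x) hc.le]
  · have hle : Real.exp θ ≤ 1 + α * lam :=
      (Real.le_log_iff_exp_le (by linarith)).mp (not_lt.mp hpos)
    have hge : 1 - α * lam ≤ Real.exp θ :=
      (Real.log_le_iff_le_exp (by linarith)).mp (not_lt.mp hneg)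
    have habs : |Real.exp θ - 1| ≤ α * lam := abs_le.mpr ⟨by linarith, by linarith⟩
    rw [Real.exp_zero, abs_zero, sub_zero, sub_zero]
    calc (Real.exp θ - 1) * x ≤ |(Real.exp θ - 1) * x| := le_abs_self _
      _ = |Real.exp θ - 1| * |x| := abs_mul _ _
      _ ≤ α * lam * |x| := by gcongr

/-- Every point other than `expProxPt α λ θ` has a strictly larger objective value. -/
lemma objective_expProxPt_lt {α lam : ℝ} (hα : 0 < α) (hlam : 0 < lam)
    (h1 : α * lam < 1) {θ x : ℝ} (hx : x ≠ expProxPt α lam θ) :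
    α * |expProxPt α lam θ| + (1 / lam) * expDiv (expProxPt α lam θ) θ <
      α * |x| + (1 / lam) * expDiv x θ := by
  have hsub := exp_sub_exp_expProxPt_mul_le hα hlam h1 θ x
  have hdiv := expDiv_pos hx
  have hthree := expDiv_eq_add x (expProxPt α lam θ) θ
  refine lt_of_mul_lt_mul_left ?_ hlam.le
  have hcancel (a d : ℝ) : lam * (α * a + 1 / lam * d) = α * lam * a + d := by
    field_simp
  rw [hcancel, hcancel]
  linarith

/-- The left Bregman proximity operator of `α|·|` associated with `exp`: for `αλ < 1`,
the function `ϑ ↦ α|ϑ| + (1/λ)·D_exp(ϑ, θ)` attains its infimum at the unique point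
given by the explicit formula `expProxPt`. -/
theorem stmt12 (α lam : ℝ) (hα : 0 < α) (hlam : 0 < lam) (h1 : α * lam < 1) :
    ∀ θ : ℝ,
      (∀ ϑ : ℝ,
        α * |expProxPt α lam θ| + (1 / lam) * expDiv (expProxPt α lam θ) θ ≤
          α * |ϑ| + (1 / lam) * expDiv ϑ θ) ∧
      (∀ ϑ : ℝ,
        (∀ ϑ' : ℝ, α * |ϑ| + (1 / lam) * expDiv ϑ θ ≤
          α * |ϑ'| + (1 / lam) * expDiv ϑ' θ) →
        ϑ = expProxPt α lam θ) := by
  intro θ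
  refine ⟨fun ϑ => ?_, fun ϑ hmin => ?_⟩
  · rcases eq_or_ne ϑ (expProxPt α lam θ) with rfl | hne
    · exact le_rfl
    · exact (objective_expProxPt_lt hα hlam h1 hne).le
  · by_contra hne
    exact (objective_expProxPt_lt hα hlam h1 hne).not_ge (hmin _)
end
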